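/- For each N and n there exists f(n, N) ∈ ℕ such that: whenever 𝔸 is a relational structure admitting a chain of n Hagemann–Mitschke terms as polymorphisms and I is an unsatisfiable path instance of CSP(𝔸) such that |B_i| ≤ N for all i, then 𝒫_𝔸^{f(n,N)}(I) ⊢ G. -/

import Mathlib

namespace CSPPaper

/-- A relational structure on `A`: a family of finitary relations (the basic
relations), a relation of arity `n` being a set of `n`-tuples `Fin n → A`. -/
structure RelStruct (A : Type) where
  basic : Set (Σ n : ℕ, Set (Fin n → A))

/-- A CSP instance with variables `V` over domain `A`: a set of constraints,
each consisting of a scope (a tuple of variables) and a constraint relation. -/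
structure Instance (A : Type) (V : Type) where
  constraints : Set (Σ n : ℕ, (Fin n → V) × Set (Fin n → A))

/-- `f : V → A` is a solution of the instance `I`. -/
def Instance.Sol {A V : Type} (I : Instance A V) (f : V → A) : Prop :=
  ∀ c ∈ I.constraints, (fun i => f (c.2.1 i)) ∈ c.2.2

def Instance.Satisfiable {A V : Type} (I : Instance A V) : Prop :=
  ∃ f, I.Sol f

/-- `I` is an instance of `CSP(𝔸)`: all its constraint relations are basic
relations of `𝔸`. -/
def IsCSPInstance {A V : Type} (𝔸 : RelStruct A) (I : Instance A V) : Prop :=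
  ∀ c ∈ I.constraints, (⟨c.1, c.2.2⟩ : Σ n : ℕ, Set (Fin n → A)) ∈ 𝔸.basic

/-- An atom of a Datalog rule over the variable set `Fin r`: a predicate
(a relation on `A`) applied to a tuple of variables. -/
structure Atom (A : Type) (r : ℕ) where
  arity : ℕ
  scope : Fin arity → Fin r
  rel : Set (Fin arity → A)

def Atom.holds {A : Type} {r : ℕ} (a : Atom A r) (f : Fin r → A) : Prop :=
  (fun i => f (a.scope i)) ∈ a.rel

/-- A rule of the `r`-ary maximal symmetric Datalog program `𝒫_𝔸^r` consistent
with `𝔸`: a linear Datalog rule on at most `r` variables, whose head is an IDB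
(an arbitrary relation on `A` of arity at most `r`), whose body contains at most
one IDB atom (`idb`) and otherwise non-IDB atoms for basic relations of `𝔸`
of arity at most `r` (`edb`, without repetition), such that the rule is
consistent with `𝔸`, and, if the body contains an IDB atom, its mirror image is
also consistent with `𝔸`. -/
structure Rule (A : Type) (𝔸 : RelStruct A) (r : ℕ) where
  head : Atom A r
  idb : Option (Atom A r)
  edb : List (Atom A r)
  head_arity : head.arity ≤ r
  idb_arity : ∀ a ∈ idb, a.arity ≤ r
  edb_arity : ∀ a ∈ edb, a.arity ≤ r
  edb_basic : ∀ a ∈ edb, (⟨a.arity, a.rel⟩ : Σ n : ℕ, Set (Fin n → A)) ∈ 𝔸.basic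
  nodup : edb.Nodup
  consistent : ∀ f : Fin r → A,
    (∀ a ∈ idb, a.holds f) → (∀ a ∈ edb, a.holds f) → head.holds f
  mirror : ∀ a ∈ idb, ∀ f : Fin r → A,
    head.holds f → (∀ b ∈ edb, b.holds f) → a.holds f

/-- `Derives 𝔸 r I ρ R`: the `r`-ary maximal symmetric Datalog program
`𝒫_𝔸^r` consistent with `𝔸`, run on the instance `I`, derives `R(ρ)`.
This holds if `(ρ, R)` is a constraint of `I`, or if some rule of `𝒫_𝔸^r`
with head `R(τ)` admits an evaluation `ω` of its variables into `V` with
`ω ∘ τ = ρ`, whose (at most one) IDB body atom is derived and whose non-IDB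
body atoms are constraints of `I` under `ω`. -/
inductive Derives {A V : Type} (𝔸 : RelStruct A) (r : ℕ) (I : Instance A V) :
    ∀ {n : ℕ}, (Fin n → V) → Set (Fin n → A) → Prop
  | base {n : ℕ} (ρ : Fin n → V) (R : Set (Fin n → A)) :
      (⟨n, ρ, R⟩ : Σ n : ℕ, (Fin n → V) × Set (Fin n → A)) ∈ I.constraints →
      Derives 𝔸 r I ρ R
  | step (rule : Rule A 𝔸 r) (ω : Fin r → V) :
      (∀ a ∈ rule.idb, Derives 𝔸 r I (fun i => ω (a.scope i)) a.rel) →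
      (∀ a ∈ rule.edb,
        (⟨a.arity, fun i => ω (a.scope i), a.rel⟩ :
          Σ n : ℕ, (Fin n → V) × Set (Fin n → A)) ∈ I.constraints) →
      Derives 𝔸 r I (fun i => ω (rule.head.scope i)) rule.head.rel

/-- `𝒫_𝔸^r(I) ⊢ G`: the program derives a goal predicate, i.e. an empty
relation of arity at most `r`. -/
def DerivesGoal {A V : Type} (𝔸 : RelStruct A) (r : ℕ) (I : Instance A V) : Prop :=
  ∃ (n : ℕ) (ρ : Fin n → V), n ≤ r ∧ Derives 𝔸 r I ρ (∅ : Set (Fin n → A))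

/-- `𝒫_𝔸^r(I) ⊢ J`: the program run on `I` derives every constraint of `J`. -/
def DerivesInstance {A V : Type} (𝔸 : RelStruct A) (r : ℕ) (I J : Instance A V) : Prop :=
  ∀ c ∈ J.constraints, Derives 𝔸 r I c.2.1 c.2.2

/-- An `m`-ary operation `t` preserves the `n`-ary relation `R`. -/
def PreservesRel {A : Type} {m n : ℕ} (t : (Fin m → A) → A) (R : Set (Fin n → A)) : Prop :=
  ∀ rows : Fin m → Fin n → A, (∀ j, rows j ∈ R) → (fun i => t (fun j => rows j i)) ∈ R

/-- A polymorphism of `𝔸`: an operation preserving all basic relations. -/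
def IsPolymorphism {A : Type} {m : ℕ} (𝔸 : RelStruct A) (t : (Fin m → A) → A) : Prop :=
  ∀ R ∈ 𝔸.basic, PreservesRel t R.2

def ternaryOp {A : Type} (p : A → A → A → A) : (Fin 3 → A) → A :=
  fun v => p (v 0) (v 1) (v 2)

/-- A chain of `n` Hagemann–Mitschke terms: idempotent ternary operations
`p 0, …, p n` with `p 0 x y z = x`, `p k x x y = p (k+1) x y y`, `p n x y z = z`. -/
def IsHMChain {A : Type} (n : ℕ) (p : ℕ → A → A → A → A) : Prop :=
  (∀ k ≤ n, ∀ x : A, p k x x x = x) ∧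
  (∀ x y z : A, p 0 x y z = x) ∧
  (∀ x y z : A, p n x y z = z) ∧
  (∀ k < n, ∀ x y : A, p k x x y = p (k + 1) x y y)

def Pres3Set {A : Type} (p : A → A → A → A) (S : Set A) : Prop :=
  ∀ x y z, x ∈ S → y ∈ S → z ∈ S → p x y z ∈ S

def Pres3Rel {A : Type} (p : A → A → A → A) (E : Set (A × A)) : Prop :=
  ∀ u v w, u ∈ E → v ∈ E → w ∈ E → (p u.1 v.1 w.1, p u.2 v.2 w.2) ∈ E

def PresOpSet {A : Type} {m : ℕ} (t : (Fin m → A) → A) (S : Set A) : Prop :=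
  ∀ x : Fin m → A, (∀ j, x j ∈ S) → t x ∈ S

def PresOpRel {A : Type} {m : ℕ} (t : (Fin m → A) → A) (E : Set (A × A)) : Prop :=
  ∀ x y : Fin m → A, (∀ j, (x j, y j) ∈ E) → (t x, t y) ∈ E

/-- A path instance of length `len`: variables `1, …, len`, one unary
constraint `B i` on each variable `i ∈ [1, len]`, and one binary constraint
`E i` with scope `(i, i+1)` for each `i ∈ [1, len-1]`. -/
structure PathInstance (A : Type) where
  len : ℕ
  B : ℕ → Set A
  E : ℕ → Set (A × A)

/-- A solution of the subinstance of the path instance `I` induced by `[a, b]`. -/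
def IsSolutionOn {A : Type} (I : PathInstance A) (a b : ℕ) (s : ℕ → A) : Prop :=
  (∀ i, a ≤ i → i ≤ b → s i ∈ I.B i) ∧
  (∀ i, a ≤ i → i + 1 ≤ b → (s i, s (i + 1)) ∈ I.E i)

def IsSolution {A : Type} (I : PathInstance A) (s : ℕ → A) : Prop :=
  IsSolutionOn I 1 I.len s

def unaryRel {A : Type} (S : Set A) : Set (Fin 1 → A) := {f | f 0 ∈ S}

def pairRel {A : Type} (E : Set (A × A)) : Set (Fin 2 → A) := {f | (f 0, f 1) ∈ E}

/-- The path instance `I`, presented as a CSP instance on the variable set `ℕ`. -/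
def PathInstance.toInstance {A : Type} (I : PathInstance A) : Instance A ℕ where
  constraints :=
    {c | (∃ i, 1 ≤ i ∧ i ≤ I.len ∧
            c = ⟨1, fun _ => i, unaryRel (I.B i)⟩) ∨
         (∃ i, 1 ≤ i ∧ i + 1 ≤ I.len ∧
            c = ⟨2, ![i, i + 1], pairRel (I.E i)⟩)}

/-- An `n`-braid in the path instance `I`: solutions `s 0, …, s n` and indices
`1 ≤ idx 1 < … < idx n ≤ I.len` with `s k (idx k) = s (k+1) (idx k)` and
`s (k-1) (idx (k+1)) = s k (idx (k+1))` for `k = 1, …, n-1`. -/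
def IsBraid {A : Type} (I : PathInstance A) (n : ℕ) (s : ℕ → ℕ → A) (idx : ℕ → ℕ) : Prop :=
  (∀ k ≤ n, IsSolution I (s k)) ∧
  1 ≤ idx 1 ∧ idx n ≤ I.len ∧
  (∀ k, 1 ≤ k → k < n → idx k < idx (k + 1)) ∧
  (∀ k, 1 ≤ k → k + 1 ≤ n →
    s k (idx k) = s (k + 1) (idx k) ∧ s (k - 1) (idx (k + 1)) = s k (idx (k + 1)))

/-- The binary constraint of `I` with scope `(i, i+1)` is subdirect. -/
def SubdirectAt {A : Type} (I : PathInstance A) (i : ℕ) : Prop :=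
  (I.B i).Nonempty ∧ (I.B (i + 1)).Nonempty ∧
  (∀ a ∈ I.B i, ∃ b ∈ I.B (i + 1), (a, b) ∈ I.E i) ∧
  (∀ b ∈ I.B (i + 1), ∃ a ∈ I.B i, (a, b) ∈ I.E i)

/-- The subinstance of `I` induced by `[a, b]` is subdirect. -/
def SubdirectOn {A : Type} (I : PathInstance A) (a b : ℕ) : Prop :=
  ∀ i, a ≤ i → i + 1 ≤ b → SubdirectAt I i

def Subdirect {A : Type} (I : PathInstance A) : Prop := SubdirectOn I 1 I.len

/-- The sets `C_i`: `C 1 = B 1` and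
`C (i+1) = {b ∈ B (i+1) | ∃ c ∈ C i, (c, b) ∈ E i}`. -/
def reachSet {A : Type} (I : PathInstance A) : ℕ → Set A
  | 0 => ∅
  | 1 => I.B 1
  | (i + 2) => {b ∈ I.B (i + 2) | ∃ c ∈ reachSet I (i + 1), (c, b) ∈ I.E (i + 1)}

/-- `B_{i,i+1}` contains a backward edge: an edge `(b, c) ∈ E i` with
`b ∈ B i \ C i` and `c ∈ C (i+1)`. -/
def BackwardAt {A : Type} (I : PathInstance A) (i : ℕ) : Prop :=
  1 ≤ i ∧ i + 1 ≤ I.len ∧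
  ∃ b c, (b, c) ∈ I.E i ∧ b ∈ I.B i ∧ b ∉ reachSet I i ∧ c ∈ reachSet I (i + 1)

/-- Adjacency in the graph `Conn(I_{[lo,hi]})`: its vertices are pairs `(i, a)`
with `a ∈ B i`, `lo ≤ i ≤ hi`, and `(i, a)` is adjacent to `(i+1, b)` whenever
`(a, b) ∈ E i`. -/
def connAdj {A : Type} (I : PathInstance A) (lo hi : ℕ) (p q : ℕ × A) : Prop :=
  lo ≤ p.1 ∧ p.1 + 1 ≤ hi ∧ q.1 = p.1 + 1 ∧
  p.2 ∈ I.B p.1 ∧ q.2 ∈ I.B q.1 ∧ (p.2, q.2) ∈ I.E p.1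

/-- `λ_{I,lo,hi}`: the pairs `(a, b) ∈ B lo × B hi` joined by an undirected path
in `Conn(I_{[lo,hi]})`. -/
def lamRel {A : Type} (I : PathInstance A) (lo hi : ℕ) : Set (A × A) :=
  {ab | ab.1 ∈ I.B lo ∧ ab.2 ∈ I.B hi ∧
    Relation.ReflTransGen (fun p q => connAdj I lo hi p q ∨ connAdj I lo hi q p)
      (lo, ab.1) (hi, ab.2)}

open Classical in
/-- The variable set `U` of the instance `I_λ`: the variables `1`, `len`, and
`i, i+1` for every index `i` such that `B_{i,i+1}` has a backward edge. -/
noncomputable def lamVars {A : Type} (I : PathInstance A) : Finset ℕ :=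
  (Finset.Icc 1 I.len).filter
    (fun v => v = 1 ∨ v = I.len ∨ BackwardAt I v ∨ (2 ≤ v ∧ BackwardAt I (v - 1)))

/-- The `t`-th smallest element of `U` (`1`-indexed). -/
noncomputable def lamEnum {A : Type} (I : PathInstance A) (t : ℕ) : ℕ :=
  ((lamVars I).sort (· ≤ ·)).getD (t - 1) 0

/-- The instance `I_λ`, presented as a path instance whose `t`-th variable is
the `t`-th smallest element of `U`: it consists of the subinstance of `I`
induced by `U`, where each gap between consecutive elements `u < w` of `U` with
`w > u + 1` is filled by the binary constraint `λ_{I,u,w}`. -/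
noncomputable def lamInst {A : Type} (I : PathInstance A) : PathInstance A where
  len := (lamVars I).card
  B := fun t => I.B (lamEnum I t)
  E := fun t =>
    if lamEnum I (t + 1) = lamEnum I t + 1 then I.E (lamEnum I t)
    else lamRel I (lamEnum I t) (lamEnum I (t + 1))

/-- Unpacking an `m`-tuple of elements of `V^k` into an `m*k`-tuple of
elements of `V`. -/
def unpackTuple {X : Type} {m k : ℕ} (σ : Fin m → Fin k → X) : Fin (m * k) → X :=
  fun t => σ t.divNat t.modNat

/-- Unpacking an `m`-ary relation on `A^k` into an `m*k`-ary relation on `A`. -/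
def unpackRel {A : Type} {m k : ℕ} (U : Set (Fin m → Fin k → A)) :
    Set (Fin (m * k) → A) :=
  {t | ∃ u ∈ U, ∀ i : Fin (m * k), t i = u i.divNat i.modNat}

/-- The instance `I` has pathwidth at most `p`. -/
def PathwidthLE {A V : Type} (I : Instance A V) (p : ℕ) : Prop :=
  ∃ (m : ℕ) (U : Fin m → Set V),
    (∀ v : V, ∃ i, v ∈ U i) ∧
    (∀ i, (U i).Finite ∧ (U i).ncard ≤ p + 1) ∧
    (∀ i j q : Fin m, i ≤ q → q ≤ j → ∀ v, v ∈ U i → v ∈ U j → v ∈ U q) ∧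
    (∀ c ∈ I.constraints, ∃ i, Set.range c.2.1 ⊆ U i)

/-- `𝔸` has pathwidth duality `p`: for every unsatisfiable instance `I` of
`CSP(𝔸)` there is an unsatisfiable instance `J` of `CSP(𝔸)` of pathwidth at
most `p` such that identifying some variables of `J` (along `h`) yields a
subinstance of `I`. -/
def HasPathwidthDuality {A : Type} (𝔸 : RelStruct A) (p : ℕ) : Prop :=
  ∀ (V : Type) (I : Instance A V), IsCSPInstance 𝔸 I → ¬I.Satisfiable →
    ∃ (W : Type) (J : Instance A W) (h : W → V),
      IsCSPInstance 𝔸 J ∧ ¬J.Satisfiable ∧ PathwidthLE J p ∧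
      ∀ c ∈ J.constraints,
        (⟨c.1, fun i => h (c.2.1 i), c.2.2⟩ :
          Σ n : ℕ, (Fin n → V) × Set (Fin n → A)) ∈ I.constraints

/-- The `k`-th bubble power `𝔸^(k)` of `𝔸`: the relational structure on `A^k`
whose basic relations are all unary relations definable as conjunctions of
basic relations of `𝔸` (with identification of variables and dummy variables,
but no existential quantification), and all binary relations
`E_ℐ = {(a, b) | ∀ (i,j) ∈ ℐ, a i = b j}` for `ℐ ⊆ [k]²`. -/
def bubblePower {A : Type} (𝔸 : RelStruct A) (k : ℕ) : RelStruct (Fin k → A) where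
  basic :=
    {r | (∃ L : Set (Σ n : ℕ, (Fin n → Fin k) × Set (Fin n → A)),
            (∀ c ∈ L, (⟨c.1, c.2.2⟩ : Σ n : ℕ, Set (Fin n → A)) ∈ 𝔸.basic) ∧
            r = ⟨1, {f : Fin 1 → (Fin k → A) |
                      ∀ c ∈ L, (fun i => f 0 (c.2.1 i)) ∈ c.2.2}⟩) ∨
         (∃ Idx : Set (Fin k × Fin k),
            r = ⟨2, {f : Fin 2 → (Fin k → A) | ∀ q ∈ Idx, f 0 q.1 = f 1 q.2}⟩)}


/-! ### Combinatorics: homogeneous subsets -/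

theorem homog_one (N K : ℕ) : ∃ M : ℕ, ∀ (α A : Type) (_ : LinearOrder α) (v : α → α → A)
    (c : α → Finset A) (S : Finset α), (∀ m ∈ S, (c m).card ≤ N) →
    (∀ m ∈ S, ∀ l ∈ S, v m l ∈ c m) → M ≤ S.card →
    ∃ T ⊆ S, T.card = K ∧ ∀ m ∈ T, ∀ a ∈ T, ∀ b ∈ T, m < a → m < b → v m a = v m b := by
  classical
  induction K with
  | zero => exact ⟨0, fun α A _ v c S _ _ _ => ⟨∅, by simp, by simp, by simp⟩⟩
  | succ K ih =>
    obtain ⟨M, hM⟩ := ih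
    refine ⟨N * M + 2, fun α A _ v c S hc hv hS => ?_⟩
    have hne : S.Nonempty := by
      rw [← Finset.card_pos]; omega
    set m := S.min' hne with hm
    have hmS : m ∈ S := S.min'_mem hne
    have hcard : (S.erase m).card = S.card - 1 := Finset.card_erase_of_mem hmS
    have hmaps : ∀ l ∈ S.erase m, v m l ∈ c m := fun l hl => hv m hmS l (Finset.mem_of_mem_erase hl)
    have hlt : (c m).card * M < (S.erase m).card := by
      have := Nat.mul_le_mul_right M (hc m hmS)
      omega
    obtain ⟨y, _, hy⟩ := Finset.exists_lt_card_fiber_of_mul_lt_card_of_maps_to hmaps hlt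
    set S' := (S.erase m).filter (fun l => v m l = y) with hS'
    have hsub : S' ⊆ S := fun l hl =>
      Finset.mem_of_mem_erase (Finset.mem_filter.1 hl).1
    obtain ⟨T, hTS, hTc, hT⟩ := hM α A _ v c S' (fun k hk => hc k (hsub hk))
      (fun k hk l hl => hv k (hsub hk) l (hsub hl)) hy.le
    have hmT : m ∉ T := fun h => by
      have := (Finset.mem_filter.1 (hTS h)).1
      simp at this
    have hval : ∀ a ∈ T, v m a = y := fun a ha => (Finset.mem_filter.1 (hTS ha)).2
    have hmin : ∀ a ∈ T, m ≤ a := fun a ha => S.min'_le a (hsub (hTS ha))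
    refine ⟨insert m T, ?_, ?_, ?_⟩
    · intro x hx
      rcases Finset.mem_insert.1 hx with rfl | hx
      · exact hmS
      · exact hsub (hTS hx)
    · rw [Finset.card_insert_of_notMem hmT, hTc]
    · intro k hk a ha b hb hka hkb
      rcases Finset.mem_insert.1 hk with hk' | hk
      · rw [hk'] at hka hkb ⊢
        have ha' : a ∈ T := by
          rcases Finset.mem_insert.1 ha with h | h
          · exact absurd hka (by rw [h]; exact lt_irrefl _)
          · exact h
        have hb' : b ∈ T := by
          rcases Finset.mem_insert.1 hb with h | h
          · exact absurd hkb (by rw [h]; exact lt_irrefl _)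
          · exact h
        rw [hval a ha', hval b hb']
      · have hmk := hmin k hk
        have ha' : a ∈ T := by
          rcases Finset.mem_insert.1 ha with h | h
          · exact absurd (hmk.trans_lt hka) (by rw [h]; exact lt_irrefl _)
          · exact h
        have hb' : b ∈ T := by
          rcases Finset.mem_insert.1 hb with h | h
          · exact absurd (hmk.trans_lt hkb) (by rw [h]; exact lt_irrefl _)
          · exact h
        exact hT k hk a ha' b hb' hka hkb

theorem homog_two (N K : ℕ) : ∃ M : ℕ, ∀ (A : Type) (v : ℕ → ℕ → A)
    (c : ℕ → Finset A) (S : Finset ℕ), (∀ m ∈ S, (c m).card ≤ N) →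
    (∀ m ∈ S, ∀ l ∈ S, v m l ∈ c m) → M ≤ S.card →
    ∃ T ⊆ S, T.card = K ∧
      (∀ m ∈ T, ∀ a ∈ T, ∀ b ∈ T, m < a → m < b → v m a = v m b) ∧
      (∀ m ∈ T, ∀ a ∈ T, ∀ b ∈ T, a < m → b < m → v m a = v m b) := by
  obtain ⟨M1, h1⟩ := homog_one N K
  obtain ⟨M2, h2⟩ := homog_one N M1
  refine ⟨M2, fun A v c S hc hv hS => ?_⟩
  obtain ⟨T2, hT2S, hT2c, hT2⟩ := h2 ℕ A _ v c S hc hv hS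
  obtain ⟨T, hTT, hTc, hT⟩ := h1 ℕᵒᵈ A _ v c T2 (fun m hm => hc m (hT2S hm))
    (fun m hm l hl => hv m (hT2S hm) l (hT2S hl)) hT2c.ge
  refine ⟨T, fun x hx => hT2S (hTT hx), hTc, ?_, ?_⟩
  · intro m hm a ha b hb
    exact hT2 m (hTT hm) a (hTT ha) b (hTT hb)
  · intro m hm a ha b hb hma hmb
    exact hT m hm a ha b hb hma hmb

/-! ### Solutions on intervals -/

theorem sol_app3 {A : Type} {I : PathInstance A} {u w : ℕ} {q : A → A → A → A}
    (hB : ∀ i, u ≤ i → i ≤ w → Pres3Set q (I.B i))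
    (hE : ∀ i, u ≤ i → i + 1 ≤ w → Pres3Rel q (I.E i)) {s t r : ℕ → A}
    (hs : IsSolutionOn I u w s) (ht : IsSolutionOn I u w t) (hr : IsSolutionOn I u w r) :
    IsSolutionOn I u w (fun i => q (s i) (t i) (r i)) :=
  ⟨fun i h1 h2 => hB i h1 h2 _ _ _ (hs.1 i h1 h2) (ht.1 i h1 h2) (hr.1 i h1 h2),
   fun i h1 h2 => hE i h1 h2 _ _ _ (hs.2 i h1 h2) (ht.2 i h1 h2) (hr.2 i h1 h2)⟩

theorem sol_stay {A : Type} {I : PathInstance A} {u w : ℕ} {C : ℕ → Set A}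
    (hC : ∀ i, u ≤ i → i + 1 ≤ w → ∀ x ∈ C i, ∀ y ∈ I.B (i + 1), (x, y) ∈ I.E i → y ∈ C (i + 1))
    {s : ℕ → A} (hs : IsSolutionOn I u w s) {i j : ℕ} (hui : u ≤ i) (hij : i ≤ j) (hjw : j ≤ w)
    (hi : s i ∈ C i) : s j ∈ C j := by
  induction j, hij using Nat.le_induction with
  | base => exact hi
  | succ j hij ih =>
    exact hC j (by omega) hjw _ (ih (by omega)) _ (hs.1 _ (by omega) hjw) (hs.2 j (by omega) hjw)

theorem braid_contra {A : Type} {I : PathInstance A} {n : ℕ} {p : ℕ → A → A → A → A}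
    (hp : IsHMChain n p) {u w : ℕ}
    (hB : ∀ k ≤ n, ∀ i, u ≤ i → i ≤ w → Pres3Set (p k) (I.B i))
    (hE : ∀ k ≤ n, ∀ i, u ≤ i → i + 1 ≤ w → Pres3Rel (p k) (I.E i))
    {C : ℕ → Set A}
    (hC : ∀ i, u ≤ i → i + 1 ≤ w → ∀ x ∈ C i, ∀ y ∈ I.B (i + 1), (x, y) ∈ I.E i → y ∈ C (i + 1))
    (h : ℕ → ℕ) (hmono : ∀ i j, i < j → j ≤ 2 * n + 4 → h i < h j)
    (hu : ∀ j ≤ 2 * n + 4, u ≤ h j) (hw : ∀ j ≤ 2 * n + 4, h j + 1 ≤ w)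
    (e : ℕ → ℕ → A) (he : ∀ j ≤ 2 * n + 4, IsSolutionOn I u w (e (h j)))
    (he1 : ∀ j ≤ 2 * n + 4, e (h j) (h j) ∉ C (h j))
    (he2 : ∀ j ≤ 2 * n + 4, e (h j) (h j + 1) ∈ C (h j + 1))
    (heq1 : ∀ m a b, m < a → m < b → a ≤ 2 * n + 4 → b ≤ 2 * n + 4 →
      e (h a) (h m) = e (h b) (h m))
    (heq2 : ∀ m a b, a < m → b < m → m ≤ 2 * n + 4 →
      e (h a) (h m) = e (h b) (h m)) : False := by
  obtain ⟨_, hp0, hpn, hpk⟩ := hp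
  have key : ∀ k, k ≤ n → p k (e (h (2 * k)) (h (2 * k + 1))) (e (h (2 * k + 2)) (h (2 * k + 1)))
      (e (h (2 * k + 4)) (h (2 * k + 1))) ∈ C (h (2 * k + 1)) := by
    intro k
    induction k with
    | zero =>
      intro _
      rw [hp0]
      have h01 := hmono 0 1 (by omega) (by omega)
      exact sol_stay hC (he 0 (by omega)) (i := h 0 + 1) (by have := hu 0 (by omega); omega)
        (by simpa using h01) (by have := hw 1 (by omega); simpa using by omega) (he2 0 (by omega))
    | succ k ih =>
      intro hk
      have hsol := sol_app3 (hB k (by omega)) (hE k (by omega)) (he (2 * k) (by omega))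
        (he (2 * k + 2) (by omega)) (he (2 * k + 4) (by omega))
      have hlt := hmono (2 * k + 1) (2 * k + 3) (by omega) (by omega)
      have h3 := sol_stay hC hsol (i := h (2 * k + 1)) (j := h (2 * k + 3)) (hu _ (by omega))
        hlt.le (by have := hw (2 * k + 3) (by omega); omega) (ih (by omega))
      rw [heq2 (2 * k + 3) (2 * k) (2 * k + 2) (by omega) (by omega) (by omega),
        hpk k (by omega)] at h3
      have e1 : 2 * (k + 1) = 2 * k + 2 := by ring
      rw [e1]
      rw [heq1 (2 * k + 2 + 1) (2 * k + 2 + 4) (2 * k + 2 + 2) (by omega) (by omega) (by omega)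
        (by omega)]
      exact h3
  have hfin := key n le_rfl
  rw [hpn] at hfin
  have hlt := hmono (2 * n + 1) (2 * n + 4) (by omega) (by omega)
  exact he1 (2 * n + 4) le_rfl (sol_stay hC (he (2 * n + 4) le_rfl) (hu _ (by omega)) hlt.le
    (by have := hw (2 * n + 4) le_rfl; omega) hfin)

/-- Extending a solution to the right. -/
theorem ext_right {A : Type} {I : PathInstance A} {a j w : ℕ} {s : ℕ → A}
    (hs : IsSolutionOn I a j s) (hjw : j ≤ w) (haj : a ≤ j)
    (hx : ∀ i, j ≤ i → i < w → ∀ x ∈ I.B i, (i = j → x = s j) → ∃ y ∈ I.B (i + 1), (x, y) ∈ I.E i) :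
    ∃ s', IsSolutionOn I a w s' ∧ ∀ i ≤ j, s' i = s i := by
  induction w, hjw using Nat.le_induction with
  | base => exact ⟨s, hs, fun _ _ => rfl⟩
  | succ w hjw ih =>
    obtain ⟨s', hs', heq⟩ := ih (fun i h1 h2 => hx i h1 (by omega))
    obtain ⟨y, hy, hye⟩ := hx w hjw (by omega) (s' w) (hs'.1 w (by omega) le_rfl)
      (fun h => by subst h; exact heq _ le_rfl)
    refine ⟨Function.update s' (w + 1) y, ⟨?_, ?_⟩, ?_⟩
    · intro i h1 h2
      by_cases h : i = w + 1
      · subst h; simpa using hy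
      · rw [Function.update_of_ne h]; exact hs'.1 i h1 (by omega)
    · intro i h1 h2
      rw [Function.update_of_ne (show i ≠ w + 1 by omega)]
      by_cases h : i = w
      · subst h; simpa using hye
      · rw [Function.update_of_ne (by omega)]; exact hs'.2 i h1 (by omega)
    · intro i hi
      rw [Function.update_of_ne (by omega)]; exact heq i hi

/-- Extending a solution to the left. -/
theorem ext_left {A : Type} {I : PathInstance A} {u a w : ℕ} {s : ℕ → A}
    (hs : IsSolutionOn I a w s) (hua : u ≤ a) (haw : a ≤ w)
    (hx : ∀ i, u ≤ i → i < a → ∀ y ∈ I.B (i + 1), (i + 1 = a → y = s a) →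
      ∃ x ∈ I.B i, (x, y) ∈ I.E i) :
    ∃ s', IsSolutionOn I u w s' ∧ ∀ i, a ≤ i → s' i = s i := by
  obtain ⟨d, rfl⟩ := Nat.exists_eq_add_of_le hua
  have key : ∀ k ≤ d, ∃ s', IsSolutionOn I (u + d - k) w s' ∧ ∀ i, u + d ≤ i → s' i = s i := by
    intro k
    induction k with
    | zero => exact fun _ => ⟨s, hs, fun _ _ => rfl⟩
    | succ k ih =>
      intro hk
      obtain ⟨s', hs', heq⟩ := ih (by omega)
      obtain ⟨v, hv⟩ : ∃ v, v = u + d - (k + 1) := ⟨_, rfl⟩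
      have hv1 : u + d - k = v + 1 := by omega
      rw [← hv]
      rw [hv1] at hs'
      obtain ⟨x, hxB, hxE⟩ := hx v (by omega) (by omega) (s' (v + 1))
        (hs'.1 _ le_rfl (by omega)) (fun h => by rw [h]; exact heq _ le_rfl)
      refine ⟨Function.update s' v x, ⟨?_, ?_⟩, ?_⟩
      · intro i h1 h2
        by_cases h : i = v
        · subst h; simpa using hxB
        · rw [Function.update_of_ne h]; exact hs'.1 i (by omega) h2
      · intro i h1 h2
        rw [Function.update_of_ne (show i + 1 ≠ v by omega)]
        by_cases h : i = v
        · subst h; simpa using hxE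
        · rw [Function.update_of_ne (by omega)]; exact hs'.2 i (by omega) h2
      · intro i hi
        rw [Function.update_of_ne (by omega)]; exact heq i hi
  obtain ⟨s', h1, h2⟩ := key d le_rfl
  rw [Nat.add_sub_cancel] at h1
  exact ⟨s', h1, h2⟩

/-- Backward edges with respect to a family of sets. -/
def BackAt {A : Type} (I : PathInstance A) (C : ℕ → Set A) (i : ℕ) : Prop :=
  ∃ x z, x ∈ I.B i ∧ x ∉ C i ∧ z ∈ I.B (i + 1) ∧ z ∈ C (i + 1) ∧ (x, z) ∈ I.E i

/-- Elements strictly inside have both neighbours. -/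
def Inner {A : Type} (I : PathInstance A) (u w : ℕ) : Prop :=
  (∀ i, u < i → i < w → ∀ x ∈ I.B i, ∃ y ∈ I.B (i + 1), (x, y) ∈ I.E i) ∧
  (∀ i, u ≤ i → i + 1 < w → ∀ y ∈ I.B (i + 1), ∃ x ∈ I.B i, (x, y) ∈ I.E i)

theorem ext_edge {A : Type} {I : PathInstance A} {u w : ℕ} (hI : Inner I u w) {i : ℕ}
    (hui : u ≤ i) (hiw : i + 1 ≤ w) {x z : A} (hx : x ∈ I.B i) (hz : z ∈ I.B (i + 1))
    (hxz : (x, z) ∈ I.E i) : ∃ s, IsSolutionOn I u w s ∧ s i = x ∧ s (i + 1) = z := by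
  have h0 : IsSolutionOn I i (i + 1) (fun k => if k = i then x else z) := by
    constructor
    · intro k h1 h2
      by_cases h : k = i
      · subst h; simpa using hx
      · have : k = i + 1 := by omega
        subst this; simpa using hz
    · intro k h1 h2
      have : k = i := by omega
      subst this; simpa using hxz
  obtain ⟨s1, hs1, he1⟩ := ext_right h0 hiw (by omega)
    (fun k h1 h2 y hy _ => hI.1 k (by omega) h2 y hy)
  obtain ⟨s2, hs2, he2⟩ := ext_left hs1 hui (by omega)
    (fun k h1 h2 y hy _ => hI.2 k h1 (by omega) y hy)
  refine ⟨s2, hs2, ?_, ?_⟩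
  · rw [he2 i le_rfl, he1 i (by omega)]; simp
  · rw [he2 (i + 1) (by omega), he1 (i + 1) (by omega)]; simp

theorem back_bound (N n : ℕ) : ∃ M : ℕ, ∀ (A : Type), Finite A → ∀ (I : PathInstance A)
    (p : ℕ → A → A → A → A) (u w : ℕ) (C : ℕ → Set A) (S : Finset ℕ), IsHMChain n p →
    (∀ k ≤ n, ∀ i, u ≤ i → i ≤ w → Pres3Set (p k) (I.B i)) →
    (∀ k ≤ n, ∀ i, u ≤ i → i + 1 ≤ w → Pres3Rel (p k) (I.E i)) →
    (∀ i, u ≤ i → i + 1 ≤ w → ∀ x ∈ C i, ∀ y ∈ I.B (i + 1), (x, y) ∈ I.E i → y ∈ C (i + 1)) →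
    Inner I u w → (∀ i, u ≤ i → i ≤ w → (I.B i).ncard ≤ N) →
    (∀ i ∈ S, u ≤ i ∧ i + 1 ≤ w ∧ BackAt I C i) → S.card ≤ M := by
  classical
  obtain ⟨M, hM⟩ := homog_two N (2 * n + 5)
  refine ⟨M, fun A hA I p u w C S hp hB hE hC hI hN hS => ?_⟩
  by_contra hcon
  have hex : ∀ i, ∃ s : ℕ → A, i ∈ S → IsSolutionOn I u w s ∧ s i ∉ C i ∧ s (i + 1) ∈ C (i + 1) := by
    intro i
    by_cases hi : i ∈ S
    · obtain ⟨h1, h2, x, z, hx, hxC, hz, hzC, hxz⟩ := hS i hi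
      obtain ⟨s, hs, rfl, rfl⟩ := ext_edge hI h1 h2 hx hz hxz
      exact ⟨s, fun _ => ⟨hs, hxC, hzC⟩⟩
    · have hne : S.Nonempty := by rw [← Finset.card_pos]; omega
      obtain ⟨j, hj⟩ := hne
      obtain ⟨_, _, x, _⟩ := hS j hj
      exact ⟨fun _ => x, fun h => absurd h hi⟩
  choose e he using hex
  obtain ⟨T, hTS, hTc, hT1, hT2⟩ := hM A (fun m l => e l m) (fun m => (Set.toFinite (I.B m)).toFinset)
    S (fun m hm => by
      rw [← Set.ncard_eq_toFinset_card]; exact hN m (hS m hm).1 (by have := (hS m hm).2.1; omega))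
    (fun m hm l hl => by
      simp only [Set.Finite.mem_toFinset]
      exact (he l hl).1.1 m (hS m hm).1 (by have := (hS m hm).2.1; omega)) (by omega)
  let h : ℕ → ℕ := fun j => if hj : j < 2 * n + 5 then T.orderEmbOfFin hTc ⟨j, hj⟩ else 0
  have hh : ∀ j (hj : j ≤ 2 * n + 4), h j = T.orderEmbOfFin hTc ⟨j, by omega⟩ := fun j hj => by
    simp only [h]; rw [dif_pos]
  have hmem : ∀ j ≤ 2 * n + 4, h j ∈ T := fun j hj => by
    rw [hh j hj]; exact Finset.orderEmbOfFin_mem _ _ _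
  have hmono : ∀ i j, i < j → j ≤ 2 * n + 4 → h i < h j := fun i j hij hj => by
    rw [hh i (by omega), hh j hj]
    exact (T.orderEmbOfFin hTc).strictMono hij
  refine braid_contra hp hB hE hC h hmono (fun j hj => (hS _ (hTS (hmem j hj))).1)
    (fun j hj => (hS _ (hTS (hmem j hj))).2.1) e (fun j hj => (he _ (hTS (hmem j hj))).1)
    (fun j hj => (he _ (hTS (hmem j hj))).2.1) (fun j hj => (he _ (hTS (hmem j hj))).2.2) ?_ ?_
  · intro m a b hma hmb ha hb
    exact hT1 _ (hmem m (by omega)) _ (hmem a ha) _ (hmem b hb) (hmono _ _ hma ha)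
      (hmono _ _ hmb hb)
  · intro m a b hma hmb hm
    exact hT2 _ (hmem m hm) _ (hmem a (by omega)) _ (hmem b (by omega)) (hmono _ _ hma hm)
      (hmono _ _ hmb hm)

/-! ### A semantic form of symmetric Datalog derivations -/

/-- `f` satisfies all constraints of `I` whose scope lies in `W`. -/
def WSat {A : Type} (I : PathInstance A) (W : Finset ℕ) (f : ℕ → A) : Prop :=
  (∀ i ∈ W, 1 ≤ i → i ≤ I.len → f i ∈ I.B i) ∧
  (∀ i ∈ W, i + 1 ∈ W → 1 ≤ i → i + 1 ≤ I.len → (f i, f (i + 1)) ∈ I.E i)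

/-- `P` depends only on the variables in `W`. -/
def Dep {A : Type} (P : (ℕ → A) → Prop) (W : Finset ℕ) : Prop :=
  ∀ f g : ℕ → A, (∀ i ∈ W, f i = g i) → (P f ↔ P g)

def WStep {A : Type} (I : PathInstance A) (r : ℕ) (P Q : (ℕ → A) → Prop) : Prop :=
  ∃ W : Finset ℕ, W.card ≤ r ∧ Dep P W ∧ Dep Q W ∧ ∀ f, WSat I W f → (P f ↔ Q f)

def WConn {A : Type} (I : PathInstance A) (r : ℕ) : ((ℕ → A) → Prop) → ((ℕ → A) → Prop) → Prop :=
  Relation.ReflTransGen (WStep I r)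

section
variable {A : Type} {I : PathInstance A} {r k : ℕ} {P Q R : (ℕ → A) → Prop} {V W : Finset ℕ}

theorem Dep.mono (h : Dep P V) (hVW : V ⊆ W) : Dep P W :=
  fun f g hfg => h f g (fun i hi => hfg i (hVW hi))

theorem Dep.and (hP : Dep P W) (hQ : Dep Q W) : Dep (fun f => P f ∧ Q f) W :=
  fun f g hfg => and_congr (hP f g hfg) (hQ f g hfg)

theorem Dep.not (hP : Dep P W) : Dep (fun f => ¬ P f) W :=
  fun f g hfg => not_congr (hP f g hfg)

theorem Dep.const (p : Prop) : Dep (fun _ : ℕ → A => p) W := fun _ _ _ => Iff.rfl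

theorem Dep.var (S : Set A) {i : ℕ} (hi : i ∈ W) : Dep (fun f : ℕ → A => f i ∈ S) W :=
  fun f g hfg => by beta_reduce; rw [hfg i hi]

theorem Dep.pair (S : Set (A × A)) {i j : ℕ} (hi : i ∈ W) (hj : j ∈ W) :
    Dep (fun f : ℕ → A => (f i, f j) ∈ S) W :=
  fun f g hfg => by beta_reduce; rw [hfg i hi, hfg j hj]

theorem Dep.all {ι : Type} {P : ι → (ℕ → A) → Prop} (h : ∀ i, Dep (P i) W) :
    Dep (fun f => ∀ i, P i f) W :=
  fun f g hfg => forall_congr' fun i => h i f g hfg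

theorem WSat.mono {f : ℕ → A} (h : WSat I W f) (hVW : V ⊆ W) : WSat I V f :=
  ⟨fun i hi => h.1 i (hVW hi), fun i hi hi' => h.2 i (hVW hi) (hVW hi')⟩

theorem WStep.symm (h : WStep I r P Q) : WStep I r Q P := by
  obtain ⟨W, h1, h2, h3, h4⟩ := h
  exact ⟨W, h1, h3, h2, fun f hf => (h4 f hf).symm⟩

theorem WConn.symm (h : WConn I r P Q) : WConn I r Q P := by
  induction h with
  | refl => exact Relation.ReflTransGen.refl
  | tail _ h2 ih => exact Relation.ReflTransGen.head h2.symm ih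

theorem WConn.trans (h : WConn I r P Q) (h' : WConn I r Q R) : WConn I r P R :=
  Relation.ReflTransGen.trans h h'

theorem WConn.mono {r' : ℕ} (h : WConn I r P Q) (hr : r ≤ r') : WConn I r' P Q :=
  Relation.ReflTransGen.mono (fun _ _ ⟨W, h1, h2⟩ => ⟨W, h1.trans hr, h2⟩) _ _ h

theorem WConn.single (W : Finset ℕ) (hW : W.card ≤ r) (hP : Dep P W) (hQ : Dep Q W)
    (h : ∀ f, WSat I W f → (P f ↔ Q f)) : WConn I r P Q :=
  Relation.ReflTransGen.single ⟨W, hW, hP, hQ, h⟩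

theorem WConn.of_iff (h : ∀ f, P f ↔ Q f) : WConn I r P Q := by
  have : P = Q := funext fun f => propext (h f)
  subst this
  exact Relation.ReflTransGen.refl

theorem WConn.not (h : WConn I r P Q) : WConn I r (fun f => ¬ P f) (fun f => ¬ Q f) := by
  induction h with
  | refl => exact Relation.ReflTransGen.refl
  | tail _ h2 ih =>
    obtain ⟨W, h1, h2, h3, h4⟩ := h2
    exact ih.tail ⟨W, h1, h2.not, h3.not, fun f hf => not_congr (h4 f hf)⟩

theorem WConn.and (h : WConn I r P Q) (hR : Dep R V) (hV : V.card ≤ k) :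
    WConn I (r + k) (fun f => R f ∧ P f) (fun f => R f ∧ Q f) := by
  classical
  induction h with
  | refl => exact Relation.ReflTransGen.refl
  | tail _ h2 ih =>
    obtain ⟨W, h1, h2, h3, h4⟩ := h2
    refine ih.tail ⟨W ∪ V, (Finset.card_union_le _ _).trans (by omega), ?_, ?_, ?_⟩
    · exact (hR.mono Finset.subset_union_right).and (h2.mono Finset.subset_union_left)
    · exact (hR.mono Finset.subset_union_right).and (h3.mono Finset.subset_union_left)
    · exact fun f hf => and_congr Iff.rfl (h4 f (hf.mono Finset.subset_union_left))

theorem WConn.forall_finset {ι : Type} (S : Finset ι) (P : ι → (ℕ → A) → Prop)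
    (h : ∀ i ∈ S, WConn I r (fun _ => True) (P i)) (hD : ∀ i ∈ S, Dep (P i) V) (hV : V.card ≤ k) :
    WConn I (r + k) (fun _ => True) (fun f => ∀ i ∈ S, P i f) := by
  classical
  induction S using Finset.induction_on with
  | empty => exact WConn.of_iff (by simp)
  | insert a S ha ih =>
    have h1 := ih (fun i hi => h i (Finset.mem_insert_of_mem hi))
      (fun i hi => hD i (Finset.mem_insert_of_mem hi))
    have hDS : Dep (fun f => ∀ i ∈ S, P i f) V := fun f g hfg =>
      forall₂_congr fun i hi => hD i (Finset.mem_insert_of_mem hi) f g hfg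
    have h2 := (h a (Finset.mem_insert_self _ _)).and hDS hV
    refine h1.trans ((WConn.of_iff (by simp)).trans (h2.trans (WConn.of_iff ?_)))
    intro f
    rw [Finset.forall_mem_insert, and_comm]

end

/-! ### Deriving the reachability relations on subdirect intervals -/

/-- Pairs joined by a path in the interval `[u, w]`. -/
def rhoRel {A : Type} (I : PathInstance A) (u w : ℕ) : Set (A × A) :=
  {ab | ∃ s, IsSolutionOn I u w s ∧ s u = ab.1 ∧ s w = ab.2}

theorem rho_pair_refute {A : Type} {I : PathInstance A} {u w M : ℕ} (h1u : 1 ≤ u) (huw : u < w)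
    (hw : w ≤ I.len) {a b : A} (hab : (a, b) ∉ rhoRel I u w)
    (hM : ∀ S : Finset ℕ, (∀ i ∈ S, u ≤ i ∧ i + 1 ≤ w ∧
      BackAt I (fun j => {y | (a, y) ∈ rhoRel I u j}) i) → S.card ≤ M) :
    WConn I (M + 3) (fun f => f u = a ∧ f w = b) (fun _ => False) := by
  classical
  set C : ℕ → Set A := fun j => {y | (a, y) ∈ rhoRel I u j} with hCdef
  have hC : ∀ i, u ≤ i → ∀ x ∈ C i, ∀ y ∈ I.B (i + 1), (x, y) ∈ I.E i → y ∈ C (i + 1) := by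
    rintro i hi x ⟨s, hs, hsu, hsi⟩ y hy hxy
    simp only at hsu hsi
    refine ⟨Function.update s (i + 1) y, ⟨?_, ?_⟩, ?_, ?_⟩
    · intro k h1 h2
      by_cases h : k = i + 1
      · subst h; simpa using hy
      · rw [Function.update_of_ne h]; exact hs.1 k h1 (by omega)
    · intro k h1 h2
      rw [Function.update_of_ne (show k ≠ i + 1 by omega)]
      by_cases h : k = i
      · subst h; rw [hsi]; simpa using hxy
      · rw [Function.update_of_ne (by omega)]; exact hs.2 k h1 (by omega)
    · rw [Function.update_of_ne (by omega)]; exact hsu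
    · simp
  let U : Finset ℕ := (Finset.range w).filter (fun i => u ≤ i ∧ BackAt I C i)
  have hU : ∀ i, i ∈ U ↔ i < w ∧ u ≤ i ∧ BackAt I C i := by
    intro i; simp [U]
  have hUc : U.card ≤ M := hM U (fun i hi => by
    obtain ⟨h1, h2, h3⟩ := (hU i).1 hi
    exact ⟨h2, h1, h3⟩)
  let P : ℕ → (ℕ → A) → Prop := fun i f => (∀ v ∈ U, v ≤ i → f v ∈ C v) ∧ f i ∈ C i
  have hPdep : ∀ (i : ℕ) (W : Finset ℕ), U ⊆ W → i ∈ W → Dep (P i) W := by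
    intro i W hUW hi
    refine Dep.and (fun f g hfg => ?_) (Dep.var _ hi)
    exact forall₂_congr fun v hv => by rw [hfg v (hUW hv)]
  have chain : ∀ i, u ≤ i → i ≤ w → WConn I (M + 2) (P u) (P i) := by
    intro i hui
    induction i, hui using Nat.le_induction with
    | base => exact fun _ => Relation.ReflTransGen.refl
    | succ i hui ih =>
      intro hiw
      refine (ih (by omega)).trans (WConn.single (insert i (insert (i + 1) U)) ?_ ?_ ?_ ?_)
      · have h1 := Finset.card_insert_le i (insert (i + 1) U)
        have h2 := Finset.card_insert_le (i + 1) U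
        omega
      · exact hPdep _ _ (fun x hx => by simp [hx]) (by simp)
      · exact hPdep _ _ (fun x hx => by simp [hx]) (by simp)
      · intro f hf
        have hBi := hf.1 i (by simp) (by omega) (by omega)
        have hBi' := hf.1 (i + 1) (by simp) (by omega) (by omega)
        have hEi := hf.2 i (by simp) (by simp) (by omega) (by omega)
        constructor
        · rintro ⟨h1, h2⟩
          have h3 := hC i hui _ h2 _ hBi' hEi
          refine ⟨fun v hv hvi => ?_, h3⟩
          by_cases h : v = i + 1
          · rw [h]; exact h3
          · exact h1 v hv (by omega)
        · rintro ⟨h1, h2⟩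
          refine ⟨fun v hv hvi => h1 v hv (by omega), ?_⟩
          by_cases hiU : i ∈ U
          · exact h1 i hiU (by omega)
          · by_contra hcon
            exact hiU ((hU i).2 ⟨by omega, hui, f i, f (i + 1), hBi, hcon, hBi', h2, hEi⟩)
  have hch := (chain w huw.le le_rfl).and (R := fun f => f w ∈ ({b} : Set A)) (V := {w}) (k := 1)
    (Dep.var _ (by simp)) (by simp)
  refine WConn.trans (WConn.single (insert u (insert w U)) ?_ ?_ ?_ ?_)
    (hch.trans (WConn.of_iff ?_))
  · have h1 := Finset.card_insert_le u (insert w U)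
    have h2 := Finset.card_insert_le w U
    omega
  · exact Dep.and (Dep.var {a} (by simp)) (Dep.var {b} (by simp))
  · exact Dep.and (Dep.var _ (by simp)) (hPdep _ _ (fun x hx => by simp [hx]) (by simp))
  · intro f hf
    have hBu := hf.1 u (by simp) h1u (by omega)
    constructor
    · rintro ⟨h1, h2⟩
      have hau : f u ∈ C u := by
        refine ⟨f, ⟨fun i h1 h2 => ?_, fun i h1 h2 => by omega⟩, h1, rfl⟩
        have : i = u := by omega
        rw [this]; exact hBu
      refine ⟨h2, fun v hv hvu => ?_, hau⟩
      have := ((hU v).1 hv).2.1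
      have : v = u := by omega
      rw [this]; exact hau
    · rintro ⟨h2, _, s, _, h3, h4⟩
      exact ⟨h4.symm.trans h3, h2⟩
  · intro f
    refine ⟨?_, False.elim⟩
    rintro ⟨h2, _, h3⟩
    have : f w = b := h2
    rw [this] at h3
    exact hab h3

theorem rho_derive {A : Type} [Finite A] {I : PathInstance A} {u w M : ℕ} (h1u : 1 ≤ u)
    (huw : u < w) (hw : w ≤ I.len)
    (hM : ∀ a, ∀ S : Finset ℕ, (∀ i ∈ S, u ≤ i ∧ i + 1 ≤ w ∧
      BackAt I (fun j => {y | (a, y) ∈ rhoRel I u j}) i) → S.card ≤ M) :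
    WConn I (M + 5) (fun _ => True) (fun f => (f u, f w) ∈ rhoRel I u w) := by
  classical
  have := Fintype.ofFinite A
  have h := WConn.forall_finset (I := I) (r := M + 3) (k := 2) (V := {u, w})
    ((Finset.univ : Finset (A × A)).filter (fun ab => ab ∉ rhoRel I u w))
    (fun ab f => ¬ (f u = ab.1 ∧ f w = ab.2))
    (fun ab hab => by
      have := (rho_pair_refute h1u huw hw (a := ab.1) (b := ab.2) (Finset.mem_filter.1 hab).2
        (hM ab.1)).not
      exact (WConn.of_iff (by simp)).trans this.symm)
    (fun ab _ => Dep.not (Dep.and (Dep.var {ab.1} (by simp)) (Dep.var {ab.2} (by simp))))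
    (Finset.card_le_two)
  refine h.trans (WConn.of_iff fun f => ?_)
  constructor
  · intro h
    by_contra hcon
    exact h (f u, f w) (by simpa using hcon) ⟨rfl, rfl⟩
  · rintro h ab hab ⟨h1, h2⟩
    apply (Finset.mem_filter.1 hab).2
    rw [h1, h2] at h
    exact h

/-- Transfer of derivations from a derived instance, along a renaming of variables. -/
theorem WConn.transfer {A : Type} {I J : PathInstance A} {r s : ℕ} (σ : ℕ → ℕ)
    (hB : ∀ i, 1 ≤ i → i ≤ J.len → WConn I r (fun _ => True) (fun f => f (σ i) ∈ J.B i))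
    (hE : ∀ i, 1 ≤ i → i + 1 ≤ J.len →
      WConn I r (fun _ => True) (fun f => (f (σ i), f (σ (i + 1))) ∈ J.E i))
    {P Q : (ℕ → A) → Prop} (h : WConn J s P Q) :
    WConn I (r + 2 * s + 1) (fun f => P (f ∘ σ)) (fun f => Q (f ∘ σ)) := by
  classical
  induction h with
  | refl => exact Relation.ReflTransGen.refl
  | @tail Q R _ h2 ih =>
    refine ih.trans ?_
    obtain ⟨W, hW, hQ, hR, hQR⟩ := h2
    have hV : (W.image σ).card ≤ s := Finset.card_image_le.trans hW
    have hdep : ∀ {X : (ℕ → A) → Prop}, Dep X W → Dep (fun f => X (f ∘ σ)) (W.image σ) := by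
      intro X hX f g hfg
      exact hX _ _ fun i hi => hfg (σ i) (Finset.mem_image_of_mem _ hi)
    have hTB := WConn.forall_finset (I := I) (r := r) (k := s) (V := W.image σ)
      (W.filter (fun i => 1 ≤ i ∧ i ≤ J.len)) (fun i f => f (σ i) ∈ J.B i)
      (fun i hi => by
        have := (Finset.mem_filter.1 hi).2
        exact hB i this.1 this.2)
      (fun i hi => Dep.var _ (Finset.mem_image_of_mem _ (Finset.mem_filter.1 hi).1)) hV
    have hTE := WConn.forall_finset (I := I) (r := r) (k := s) (V := W.image σ)
      (W.filter (fun i => i + 1 ∈ W ∧ 1 ≤ i ∧ i + 1 ≤ J.len))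
      (fun i f => (f (σ i), f (σ (i + 1))) ∈ J.E i)
      (fun i hi => by
        have := (Finset.mem_filter.1 hi).2
        exact hE i this.2.1 this.2.2)
      (fun i hi => by
        have := (Finset.mem_filter.1 hi)
        exact Dep.pair _ (Finset.mem_image_of_mem _ this.1) (Finset.mem_image_of_mem _ this.2.1)) hV
    have hdB : Dep (fun f : ℕ → A => ∀ i ∈ W.filter (fun i => 1 ≤ i ∧ i ≤ J.len), f (σ i) ∈ J.B i)
        (W.image σ) := fun f g hfg => forall₂_congr fun i hi => by
      rw [hfg (σ i) (Finset.mem_image_of_mem _ (Finset.mem_filter.1 hi).1)]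
    have hdE : Dep (fun f : ℕ → A => ∀ i ∈ W.filter (fun i => i + 1 ∈ W ∧ 1 ≤ i ∧ i + 1 ≤ J.len),
        (f (σ i), f (σ (i + 1))) ∈ J.E i)
        (W.image σ) := fun f g hfg => forall₂_congr fun i hi => by
      rw [hfg (σ i) (Finset.mem_image_of_mem _ (Finset.mem_filter.1 hi).1),
        hfg (σ (i + 1)) (Finset.mem_image_of_mem _ (Finset.mem_filter.1 hi).2.1)]
    have withSat : ∀ {X : (ℕ → A) → Prop}, Dep X W → WConn I (r + 2 * s) (fun f => X (f ∘ σ))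
        (fun f => X (f ∘ σ) ∧ WSat J W (f ∘ σ)) := by
      intro X hX
      have h1 := hTB.and (hdep hX) hV
      have h2 := hTE.and ((hdep hX).and hdB) hV
      refine (WConn.of_iff (by simp)).trans ((h1.mono (by omega)).trans
        ((WConn.of_iff (by simp)).trans ((h2.mono (by omega)).trans (WConn.of_iff ?_))))
      intro f
      simp only [WSat, Finset.mem_filter, and_assoc, Function.comp]
      refine and_congr Iff.rfl (and_congr ⟨?_, ?_⟩ ⟨?_, ?_⟩) <;> grind
    refine (((withSat hQ).trans (WConn.of_iff ?_)).trans (withSat hR).symm).mono (by omega)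
    intro f
    constructor
    · rintro ⟨h1, h2⟩; exact ⟨(hQR _ h2).1 h1, h2⟩
    · rintro ⟨h1, h2⟩; exact ⟨(hQR _ h2).2 h1, h2⟩

/-! ### The main induction -/

/-- The elements of `B i` having neighbours on both sides. -/
def refSet {A : Type} (I : PathInstance A) (i : ℕ) : Set A :=
  {x | x ∈ I.B i ∧ (∀ j, 1 ≤ j → j + 1 = i → ∃ y ∈ I.B j, (y, x) ∈ I.E j) ∧
    (i + 1 ≤ I.len → ∃ y ∈ I.B (i + 1), (x, y) ∈ I.E i)}

def Small {A : Type} (I : PathInstance A) (i : ℕ) : Prop :=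
  1 ≤ i ∧ i ≤ I.len ∧ ∃ x ∈ I.B i, x ∉ refSet I i

theorem mem_refSet_of_not_small {A : Type} {I : PathInstance A} {i : ℕ} (h : ¬ Small I i)
    (h1 : 1 ≤ i) (h2 : i ≤ I.len) {x : A} (hx : x ∈ I.B i) : x ∈ refSet I i := by
  by_contra hc
  exact h ⟨h1, h2, x, hx, hc⟩

theorem refSet_derive {A : Type} {I : PathInstance A} {i : ℕ} (h1 : 1 ≤ i) (h2 : i ≤ I.len) :
    WConn I 3 (fun _ => True) (fun f => f i ∈ refSet I i) := by
  classical
  refine WConn.single {i - 1, i, i + 1} Finset.card_le_three (Dep.const _) (Dep.var _ (by simp)) ?_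
  intro f hf
  refine ⟨fun _ => ⟨hf.1 i (by simp) h1 h2, ?_, ?_⟩, fun _ => trivial⟩
  · rintro j hj rfl
    exact ⟨f j, hf.1 j (by simp) hj (by omega), hf.2 j (by simp) (by simp) hj h2⟩
  · intro h
    exact ⟨f (i + 1), hf.1 (i + 1) (by simp) (by omega) h, hf.2 i (by simp) (by simp) h1 h⟩

theorem refSet_pres {A : Type} {I : PathInstance A} {q : A → A → A → A}
    (hB : ∀ i, 1 ≤ i → i ≤ I.len → Pres3Set q (I.B i))
    (hE : ∀ i, 1 ≤ i → i + 1 ≤ I.len → Pres3Rel q (I.E i)) {i : ℕ} (h1 : 1 ≤ i) (h2 : i ≤ I.len) :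
    Pres3Set q (refSet I i) := by
  rintro x y z ⟨hx, hx1, hx2⟩ ⟨hy, hy1, hy2⟩ ⟨hz, hz1, hz2⟩
  refine ⟨hB i h1 h2 _ _ _ hx hy hz, ?_, ?_⟩
  · intro j hj hji
    obtain ⟨a, ha, ha'⟩ := hx1 j hj hji
    obtain ⟨b, hb, hb'⟩ := hy1 j hj hji
    obtain ⟨c, hc, hc'⟩ := hz1 j hj hji
    exact ⟨q a b c, hB j hj (by omega) _ _ _ ha hb hc, hE j hj (by omega) _ _ _ ha' hb' hc'⟩
  · intro hi
    obtain ⟨a, ha, ha'⟩ := hx2 hi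
    obtain ⟨b, hb, hb'⟩ := hy2 hi
    obtain ⟨c, hc, hc'⟩ := hz2 hi
    exact ⟨q a b c, hB _ (by omega) hi _ _ _ ha hb hc, hE i h1 hi _ _ _ ha' hb' hc'⟩

theorem rhoRel_pres {A : Type} {I : PathInstance A} {q : A → A → A → A} {u w : ℕ}
    (hB : ∀ i, u ≤ i → i ≤ w → Pres3Set q (I.B i))
    (hE : ∀ i, u ≤ i → i + 1 ≤ w → Pres3Rel q (I.E i)) : Pres3Rel q (rhoRel I u w) := by
  rintro ⟨_, _⟩ ⟨_, _⟩ ⟨_, _⟩ ⟨s, hs, rfl, rfl⟩ ⟨t, ht, rfl, rfl⟩ ⟨r, hr, rfl, rfl⟩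
  exact ⟨_, sol_app3 hB hE hs ht hr, rfl, rfl⟩

theorem conn_trivial {A : Type} {I : PathInstance A} (hno : ¬∃ f : ℕ → A, IsSolution I f)
    (h : 1 ≤ I.len → ¬ (I.B 1).Nonempty) : WConn I 1 (fun _ => True) (fun _ => False) := by
  refine WConn.single {1} (by simp) (Dep.const _) (Dep.const _) fun f hf => ?_
  exfalso
  by_cases hl : 1 ≤ I.len
  · exact h hl ⟨f 1, hf.1 1 (by simp) le_rfl hl⟩
  · exact hno ⟨f, fun i _ _ => by omega, fun i _ _ => by omega⟩

/-- The small index associated with `i`. -/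
noncomputable def sig {A : Type} (I : PathInstance A) (u0 : ℕ) : ℕ → ℕ
  | 0 => u0
  | (i + 1) => open Classical in if Small I (i + 1) then i + 1 else sig I u0 i

theorem sig_small {A : Type} {I : PathInstance A} {u0 : ℕ} (h0 : Small I u0) (i : ℕ) :
    Small I (sig I u0 i) := by
  induction i with
  | zero => exact h0
  | succ i ih =>
    simp only [sig]
    split_ifs with h
    · exact h
    · exact ih

theorem sig_inv {A : Type} {I : PathInstance A} {u0 : ℕ} (hmin : ∀ k < u0, ¬ Small I k)
    (i : ℕ) : (sig I u0 i ≤ i ∨ sig I u0 i = u0) ∧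
      ∀ k, sig I u0 i < k → k ≤ i → ¬ Small I k := by
  induction i with
  | zero => exact ⟨Or.inr rfl, fun k h1 h2 => by omega⟩
  | succ i ih =>
    simp only [sig]
    split_ifs with h
    · exact ⟨Or.inl le_rfl, fun k h1 h2 => by omega⟩
    · refine ⟨by omega, fun k h1 h2 => ?_⟩
      by_cases hk : k = i + 1
      · rw [hk]; exact h
      · exact ih.2 k h1 (by omega)

theorem sig_step {A : Type} {I : PathInstance A} {u0 : ℕ} (hmin : ∀ k < u0, ¬ Small I k)
    (i : ℕ) : sig I u0 i ≤ sig I u0 (i + 1) ∧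
      ∀ k, sig I u0 i < k → k < sig I u0 (i + 1) → ¬ Small I k := by
  have hi := sig_inv hmin i
  by_cases h : Small I (i + 1)
  · have he : sig I u0 (i + 1) = i + 1 := by simp only [sig]; rw [if_pos h]
    rw [he]
    have : u0 ≤ i + 1 := by
      by_contra hc
      exact hmin (i + 1) (by omega) h
    exact ⟨by omega, fun k h1 h2 => hi.2 k h1 (by omega)⟩
  · have he : sig I u0 (i + 1) = sig I u0 i := by simp only [sig]; rw [if_neg h]
    rw [he]
    exact ⟨le_rfl, fun k h1 h2 => by omega⟩

theorem sig_one {A : Type} {I : PathInstance A} {u0 : ℕ} (h0 : Small I u0)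
    (hmin : ∀ k < u0, ¬ Small I k) : sig I u0 1 = u0 := by
  simp only [sig]
  split_ifs with h
  · have := h0.1
    by_contra hc
    exact hmin 1 (by omega) h
  · rfl

theorem sol_glue {A : Type} {I : PathInstance A} {a b c : ℕ} {s t : ℕ → A}
    (hs : IsSolutionOn I a b s) (ht : IsSolutionOn I b c t) (h : s b = t b) :
    IsSolutionOn I a c (fun k => if k ≤ b then s k else t k) := by
  constructor
  · intro i h1 h2
    by_cases hi : i ≤ b
    · simp only [hi, if_true]; exact hs.1 i h1 hi
    · simp only [hi, if_false]; exact ht.1 i (by omega) h2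
  · intro i h1 h2
    by_cases hi : i + 1 ≤ b
    · simp only [hi, if_true, show i ≤ b by omega]; exact hs.2 i h1 hi
    · by_cases hib : i = b
      · subst hib
        simp only [hi, if_false, le_refl, if_true, h]; exact ht.2 i le_rfl h2
      · simp only [hi, if_false, show ¬ i ≤ b by omega]; exact ht.2 i (by omega) h2

/-- The instance on the small variables. -/
noncomputable def smallInst {A : Type} (I : PathInstance A) (u0 : ℕ) : PathInstance A where
  len := I.len
  B := fun i => refSet I (sig I u0 i)
  E := fun i => rhoRel I (sig I u0 i) (sig I u0 (i + 1))

theorem smallInst_sol {A : Type} {I : PathInstance A} {u0 : ℕ} (h0 : Small I u0)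
    (hmin : ∀ k < u0, ¬ Small I k) {t : ℕ → A} (ht : IsSolution (smallInst I u0) t) :
    ∃ f, IsSolution I f := by
  have hlen : 1 ≤ I.len := h0.1.trans h0.2.1
  have claim : ∀ i, 1 ≤ i → i ≤ I.len → ∃ s, IsSolutionOn I 1 (sig I u0 i) s ∧
      s (sig I u0 i) = t i := by
    intro i hi
    induction i, hi using Nat.le_induction with
    | base =>
      intro _
      have htB : t 1 ∈ refSet I (sig I u0 1) := ht.1 1 le_rfl hlen
      rw [sig_one h0 hmin] at htB ⊢
      have hs : IsSolutionOn I u0 u0 (fun _ => t 1) := by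
        refine ⟨fun i h1 h2 => ?_, fun i h1 h2 => by omega⟩
        have : i = u0 := by omega
        rw [this]; exact htB.1
      obtain ⟨s, hs1, hs2⟩ := ext_left hs h0.1 le_rfl (fun i h1 h2 y hy hyu => by
        by_cases hiu : i + 1 = u0
        · have := hyu hiu
          rw [this]; exact htB.2.1 i h1 hiu
        · have hlt : i + 1 < u0 := by omega
          have := h0.2.1
          exact (mem_refSet_of_not_small (hmin (i + 1) hlt) (by omega) (by omega) hy).2.1 i h1 rfl)
      exact ⟨s, hs1, hs2 u0 le_rfl⟩
    | succ i hi ih =>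
      intro hil
      obtain ⟨s, hs, hst⟩ := ih (by omega)
      obtain ⟨s', hs', h1, h2⟩ := ht.2 i hi hil
      simp only at h1 h2
      refine ⟨_, sol_glue hs hs' (hst.trans h1.symm), ?_⟩
      by_cases hle : sig I u0 (i + 1) ≤ sig I u0 i
      · have := (sig_step hmin i).1
        have heq : sig I u0 (i + 1) = sig I u0 i := by omega
        simp only [hle, if_true]
        rw [heq, hst, ← h1, ← h2, heq]
      · simp only [hle, if_false]; exact h2
  obtain ⟨s, hs, hst⟩ := claim I.len hlen le_rfl
  have htB : t I.len ∈ refSet I (sig I u0 I.len) := ht.1 I.len hlen le_rfl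
  have hsm := sig_small h0 I.len
  obtain ⟨s', hs', _⟩ := ext_right hs hsm.2.1 hsm.1 (fun i h1 h2 x hx hxi => by
    by_cases hi : i = sig I u0 I.len
    · rw [hxi hi, hst, hi]
      exact htB.2.2 (by omega)
    · have := hsm.1
      exact (mem_refSet_of_not_small ((sig_inv hmin I.len).2 i (by omega) (by omega)) (by omega)
        (by omega) hx).2.2 (by omega))
  exact ⟨s', hs'⟩

theorem main_conn (n N : ℕ) : ∃ F : ℕ, ∀ (A : Type), Finite A → ∀ (p : ℕ → A → A → A → A),
    IsHMChain n p → ∀ I : PathInstance A,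
    (∀ k ≤ n, ∀ i, 1 ≤ i → i ≤ I.len → Pres3Set (p k) (I.B i)) →
    (∀ k ≤ n, ∀ i, 1 ≤ i → i + 1 ≤ I.len → Pres3Rel (p k) (I.E i)) →
    (¬∃ f : ℕ → A, IsSolution I f) →
    (∀ i, 1 ≤ i → i ≤ I.len → (I.B i).ncard ≤ N) →
    WConn I F (fun _ => True) (fun _ => False) := by
  classical
  induction N with
  | zero =>
    refine ⟨1, fun A hA p hp I hB hE hno hN => conn_trivial hno fun hl hne => ?_⟩
    have := hN 1 le_rfl hl
    rw [Nat.le_zero, Set.ncard_eq_zero] at this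
    rw [this] at hne
    exact Set.not_nonempty_empty hne
  | succ N ih =>
    obtain ⟨F, hF⟩ := ih
    obtain ⟨M, hM⟩ := back_bound (N + 1) n
    refine ⟨M + 5 + 2 * F + 1, fun A hA p hp I hB hE hno hN => ?_⟩
    by_cases hex : ∃ i, Small I i
    · obtain ⟨u0, h0, hmin⟩ : ∃ u0, Small I u0 ∧ ∀ k < u0, ¬ Small I k :=
        ⟨Nat.find hex, Nat.find_spec hex, fun k hk => Nat.find_min hex hk⟩
      have hJ := hF A hA p hp (smallInst I u0) ?_ ?_ ?_ ?_
      · refine WConn.transfer (I := I) (J := smallInst I u0) (r := M + 5) (sig I u0) ?_ ?_ hJ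
        · intro i h1 h2
          have := sig_small h0 i
          exact (refSet_derive this.1 this.2.1).mono (by omega)
        · intro i h1 h2
          have hs1 := sig_small h0 i
          have hs2 := sig_small h0 (i + 1)
          have hst := sig_step hmin i
          change WConn I (M + 5) (fun _ => True)
            (fun f => (f (sig I u0 i), f (sig I u0 (i + 1))) ∈
              rhoRel I (sig I u0 i) (sig I u0 (i + 1)))
          by_cases heq : sig I u0 i = sig I u0 (i + 1)
          · rw [← heq]
            refine WConn.single {sig I u0 i} (by simp) (Dep.const _)
              (Dep.pair _ (by simp) (by simp)) fun f hf => ⟨fun _ => ?_, fun _ => trivial⟩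
            refine ⟨f, ⟨fun j h1 h2 => ?_, fun j h1 h2 => by omega⟩, rfl, rfl⟩
            have : j = sig I u0 i := by omega
            rw [this]
            exact hf.1 _ (by simp) hs1.1 hs1.2.1
          · have hlt : sig I u0 i < sig I u0 (i + 1) := lt_of_le_of_ne hst.1 heq
            refine rho_derive hs1.1 hlt hs2.2.1 fun a S hS => ?_
            have l1 := hs1.1
            have l2 := hs2.2.1
            refine hM A hA I p _ _ _ S hp (fun k hk j h1 h2 => hB k hk j (by omega) (by omega))
              (fun k hk j h1 h2 => hE k hk j (by omega) (by omega)) ?_ ⟨?_, ?_⟩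
              (fun j h1 h2 => hN j (by omega) (by omega)) hS
            · rintro j h1 h2 x ⟨s, hs, hsu, hsj⟩ y hy hxy
              simp only at hsu hsj
              have ht : IsSolutionOn I j (j + 1) (fun k => if k = j then x else y) := by
                constructor
                · intro k h3 h4
                  by_cases h : k = j
                  · simp only [h, if_true, ← hsj]; exact hs.1 j h1 le_rfl
                  · have : k = j + 1 := by omega
                    subst this; simpa using hy
                · intro k h3 h4
                  have : k = j := by omega
                  subst this; simpa using hxy
              refine ⟨_, sol_glue hs ht (by simpa using hsj), ?_, ?_⟩
              · simp only [h1, if_true]; exact hsu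
              · simp
            · intro j h1 h2 x hx
              exact (mem_refSet_of_not_small (hst.2 j h1 h2) (by omega) (by omega) hx).2.2 (by omega)
            · intro j h1 h2 y hy
              exact (mem_refSet_of_not_small (hst.2 (j + 1) (by omega) h2) (by omega) (by omega)
                hy).2.1 j (by omega) rfl
      · intro k hk i h1 h2
        have := sig_small h0 i
        exact refSet_pres (hB k hk) (hE k hk) this.1 this.2.1
      · intro k hk i h1 h2
        have hs1 := (sig_small h0 i).1
        have hs2 := (sig_small h0 (i + 1)).2.1
        exact rhoRel_pres (fun j h1 h2 => hB k hk j (by omega) (by omega))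
          (fun j h1 h2 => hE k hk j (by omega) (by omega))
      · rintro ⟨t, ht⟩
        exact hno (smallInst_sol h0 hmin ht)
      · intro i h1 h2
        obtain ⟨h3, h4, x, hx, hx'⟩ := sig_small h0 i
        have hlt : (refSet I (sig I u0 i)).ncard < (I.B (sig I u0 i)).ncard :=
          Set.ncard_lt_ncard ⟨fun y hy => hy.1, fun h => hx' (h hx)⟩ (Set.toFinite _)
        have := hN _ h3 h4
        change (refSet I (sig I u0 i)).ncard ≤ N
        omega
    · have hns : ∀ i, ¬ Small I i := fun i hi => hex ⟨i, hi⟩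
      refine (conn_trivial hno fun hl hne => ?_).mono (by omega)
      obtain ⟨x, hx⟩ := hne
      have hs : IsSolutionOn I 1 1 (fun _ => x) := by
        refine ⟨fun i h1 h2 => ?_, fun i h1 h2 => by omega⟩
        have : i = 1 := by omega
        rw [this]; exact hx
      obtain ⟨s', hs', _⟩ := ext_right hs hl le_rfl (fun i h1 h2 x hx _ =>
        (mem_refSet_of_not_small (hns i) h1 h2.le hx).2.2 h2)
      exact hno ⟨s', hs'⟩

/-! ### From semantic derivations to Datalog derivations -/

/-- The enumeration of a window. -/
def winTup (W : Finset ℕ) : Fin W.card → ℕ := W.orderEmbOfFin rfl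

/-- The relation on a window described by a predicate. -/
def winRel {A : Type} (W : Finset ℕ) (P : (ℕ → A) → Prop) : Set (Fin W.card → A) :=
  {g | ∃ f, (∀ j, f (winTup W j) = g j) ∧ P f}

theorem mem_winRel {A : Type} {W : Finset ℕ} {P : (ℕ → A) → Prop} (hP : Dep P W) (f : ℕ → A) :
    (fun j => f (winTup W j)) ∈ winRel W P ↔ P f := by
  constructor
  · rintro ⟨g, hg, hPg⟩
    refine (hP g f fun i hi => ?_).1 hPg
    have : i ∈ Set.range (W.orderEmbOfFin rfl) := by
      rw [Finset.range_orderEmbOfFin]; exact hi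
    obtain ⟨j, rfl⟩ := this
    exact hg j
  · exact fun h => ⟨f, fun _ => rfl, h⟩

theorem winTup_mem (W : Finset ℕ) (j : Fin W.card) : winTup W j ∈ W :=
  Finset.orderEmbOfFin_mem _ _ _

theorem exists_pos (Z : Finset ℕ) (r : ℕ) (hr : 0 < r) (hZ : Z.card ≤ r) :
    ∃ (pos : ℕ → Fin r) (ω : Fin r → ℕ), ∀ v ∈ Z, ω (pos v) = v := by
  classical
  let pos : ℕ → Fin r := fun v =>
    if h : v ∈ Z then Fin.castLE hZ (Z.equivFin ⟨v, h⟩) else ⟨0, hr⟩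
  have hinj : Set.InjOn pos Z := by
    intro a ha b hb hab
    have ha' : a ∈ Z := ha
    have hb' : b ∈ Z := hb
    simp only [pos, ha', hb', dif_pos] at hab
    have := Z.equivFin.injective (Fin.castLE_injective hZ hab)
    exact congrArg Subtype.val this
  exact ⟨pos, Function.invFunOn pos Z, fun v hv => hinj.leftInvOn_invFunOn hv⟩

theorem derives_of_step {A : Type} {𝔸 : RelStruct A} {I : PathInstance A}
    (hI : IsCSPInstance 𝔸 I.toInstance) {r : ℕ} {P Q : (ℕ → A) → Prop}
    {W W' : Finset ℕ} (hW : W.card ≤ r) (hW' : W'.card ≤ r) (hP : Dep P W) (hP' : Dep P W')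
    (hQ : Dep Q W') (hPQ : ∀ f, WSat I W' f → (P f ↔ Q f))
    (hd : Derives 𝔸 (2 * r + 2) I.toInstance (winTup W) (winRel W P)) :
    Derives 𝔸 (2 * r + 2) I.toInstance (winTup W') (winRel W' Q) := by
  classical
  obtain ⟨pos, ω, hω⟩ := exists_pos (W ∪ W') (2 * r + 2) (by omega)
    ((Finset.card_union_le _ _).trans (by omega))
  let a1 : ℕ → Atom A (2 * r + 2) := fun i => ⟨1, fun _ => pos i, unaryRel (I.B i)⟩
  let a2 : ℕ → Atom A (2 * r + 2) := fun i => ⟨2, ![pos i, pos (i + 1)], pairRel (I.E i)⟩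
  let S : Finset (Atom A (2 * r + 2)) :=
    (W'.filter (fun i => 1 ≤ i ∧ i ≤ I.len)).image a1 ∪
    (W'.filter (fun i => i + 1 ∈ W' ∧ 1 ≤ i ∧ i + 1 ≤ I.len)).image a2
  have hS : ∀ a, a ∈ S.toList ↔ (∃ i ∈ W', 1 ≤ i ∧ i ≤ I.len ∧ a = a1 i) ∨
      (∃ i ∈ W', i + 1 ∈ W' ∧ 1 ≤ i ∧ i + 1 ≤ I.len ∧ a = a2 i) := by
    intro a
    simp only [S, Finset.mem_toList, Finset.mem_union, Finset.mem_image, Finset.mem_filter]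
    grind
  have hc1 : ∀ i, 1 ≤ i → i ≤ I.len →
      (⟨1, fun _ => i, unaryRel (I.B i)⟩ : Σ n : ℕ, (Fin n → ℕ) × Set (Fin n → A)) ∈
        I.toInstance.constraints := fun i h1 h2 => Or.inl ⟨i, h1, h2, rfl⟩
  have hc2 : ∀ i, 1 ≤ i → i + 1 ≤ I.len →
      (⟨2, ![i, i + 1], pairRel (I.E i)⟩ : Σ n : ℕ, (Fin n → ℕ) × Set (Fin n → A)) ∈
        I.toInstance.constraints := fun i h1 h2 => Or.inr ⟨i, h1, h2, rfl⟩
  have hsat : ∀ f : Fin (2 * r + 2) → A, (∀ a ∈ S.toList, a.holds f) →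
      WSat I W' (fun v => f (pos v)) := by
    intro f hf
    constructor
    · intro i hi h1 h2
      exact hf (a1 i) ((hS _).2 (Or.inl ⟨i, hi, h1, h2, rfl⟩))
    · intro i hi hi' h1 h2
      exact hf (a2 i) ((hS _).2 (Or.inr ⟨i, hi, hi', h1, h2, rfl⟩))
  let idb : Atom A (2 * r + 2) := ⟨W.card, fun j => pos (winTup W j), winRel W P⟩
  let head : Atom A (2 * r + 2) := ⟨W'.card, fun j => pos (winTup W' j), winRel W' Q⟩
  have hidb : ∀ f : Fin (2 * r + 2) → A, idb.holds f ↔ P (fun v => f (pos v)) := fun f =>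
    mem_winRel hP (fun v => f (pos v))
  have hhead : ∀ f : Fin (2 * r + 2) → A, head.holds f ↔ Q (fun v => f (pos v)) := fun f =>
    mem_winRel hQ (fun v => f (pos v))
  let rule : Rule A 𝔸 (2 * r + 2) :=
    { head := head
      idb := some idb
      edb := S.toList
      head_arity := by change W'.card ≤ _; omega
      idb_arity := by
        intro a ha
        rw [Option.mem_some_iff] at ha
        subst ha
        change W.card ≤ _; omega
      edb_arity := by
        intro a ha
        rcases (hS a).1 ha with ⟨i, _, _, _, rfl⟩ | ⟨i, _, _, _, _, rfl⟩
        · change 1 ≤ _; omega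
        · change 2 ≤ _; omega
      edb_basic := by
        intro a ha
        rcases (hS a).1 ha with ⟨i, _, h1, h2, rfl⟩ | ⟨i, _, _, h1, h2, rfl⟩
        · exact hI _ (hc1 i h1 h2)
        · exact hI _ (hc2 i h1 h2)
      nodup := S.nodup_toList
      consistent := by
        intro f h1 h2
        rw [hhead]
        exact (hPQ _ (hsat f h2)).1 ((hidb f).1 (h1 idb rfl))
      mirror := by
        intro a ha f h1 h2
        rw [Option.mem_some_iff] at ha
        subst ha
        rw [hidb]
        exact (hPQ _ (hsat f h2)).2 ((hhead f).1 h1) }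
  have hW1 : (fun j => ω (pos (winTup W j))) = winTup W := funext fun j =>
    hω _ (Finset.mem_union_left _ (winTup_mem W j))
  have hW2 : (fun j => ω (pos (winTup W' j))) = winTup W' := funext fun j =>
    hω _ (Finset.mem_union_right _ (winTup_mem W' j))
  have hstep := Derives.step (I := I.toInstance) rule ω
    (by
      intro a ha
      have ha' : idb = a := Option.some.inj ha
      subst ha'
      change Derives 𝔸 _ I.toInstance (fun j => ω (pos (winTup W j))) (winRel W P)
      rw [hW1]; exact hd)
    (by
      intro a ha
      rcases (hS a).1 ha with ⟨i, hi, h1, h2, rfl⟩ | ⟨i, hi, hi', h1, h2, rfl⟩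
      · have : (fun _ : Fin 1 => ω (pos i)) = fun _ => i := by
          rw [hω i (Finset.mem_union_right _ hi)]
        change (⟨1, (fun _ : Fin 1 => ω (pos i)), _⟩ : Σ n : ℕ, (Fin n → ℕ) × Set (Fin n → A)) ∈ _
        rw [this]
        exact hc1 i h1 h2
      · have : (fun k : Fin 2 => ω (![pos i, pos (i + 1)] k)) = ![i, i + 1] := by
          funext k
          fin_cases k
          · exact hω i (Finset.mem_union_right _ hi)
          · exact hω (i + 1) (Finset.mem_union_right _ hi')
        change (⟨2, (fun k : Fin 2 => ω (![pos i, pos (i + 1)] k)), _⟩ :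
          Σ n : ℕ, (Fin n → ℕ) × Set (Fin n → A)) ∈ _
        rw [this]
        exact hc2 i h1 h2)
  change Derives 𝔸 _ I.toInstance (fun j => ω (pos (winTup W' j))) (winRel W' Q) at hstep
  rw [hW2] at hstep
  exact hstep

theorem derives_nullary {A : Type} (𝔸 : RelStruct A) (I : PathInstance A) (r : ℕ)
    (R : Set (Fin 0 → A)) (ρ : Fin 0 → ℕ) (hR : ∀ f : Fin (2 * r + 2) → A, ∀ g, g ∈ R) :
    Derives 𝔸 (2 * r + 2) I.toInstance ρ R := by
  let rule : Rule A 𝔸 (2 * r + 2) :=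
    { head := ⟨0, fun j => j.elim0, R⟩
      idb := none
      edb := []
      head_arity := Nat.zero_le _
      idb_arity := by simp
      edb_arity := by simp
      edb_basic := by simp
      nodup := by simp
      consistent := fun f _ _ => hR f _
      mirror := by simp }
  have := Derives.step (I := I.toInstance) rule (fun _ => 0) (by simp [rule]) (by simp [rule])
  have he : ρ = fun i => (fun _ => 0) (rule.head.scope i) := funext fun j => j.elim0
  rw [he]
  exact this

theorem goal_of_conn {A : Type} {𝔸 : RelStruct A} {I : PathInstance A}
    (hI : IsCSPInstance 𝔸 I.toInstance) {r : ℕ}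
    (h : WConn I r (fun _ => True) (fun _ => False)) :
    DerivesGoal 𝔸 (2 * r + 2) I.toInstance := by
  have key : ∀ Q, WConn I r (fun _ => True) Q → ∃ W : Finset ℕ, W.card ≤ r ∧ Dep Q W ∧
      Derives 𝔸 (2 * r + 2) I.toInstance (winTup W) (winRel W Q) := by
    intro Q hQ
    induction hQ with
    | refl =>
      refine ⟨∅, by simp, Dep.const _, ?_⟩
      exact derives_nullary 𝔸 I r _ _ fun f g =>
        ⟨fun _ => f ⟨0, by omega⟩, fun j => j.elim0, trivial⟩
    | tail _ h2 ih =>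
      obtain ⟨W, hW, hP, hd⟩ := ih
      obtain ⟨W', h1, h2, h3, h4⟩ := h2
      exact ⟨W', h1, h3, derives_of_step hI hW h1 hP h2 h3 h4 hd⟩
  obtain ⟨W, hW, _, hd⟩ := key _ h
  refine ⟨W.card, winTup W, by omega, ?_⟩
  have : winRel W (fun _ : ℕ → A => False) = ∅ := by
    ext g
    simp [winRel]
  rw [this] at hd
  exact hd

theorem pres_of_poly {A : Type} {𝔸 : RelStruct A} {I : PathInstance A}
    (hI : IsCSPInstance 𝔸 I.toInstance) {q : A → A → A → A}
    (hq : IsPolymorphism 𝔸 (ternaryOp q)) :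
    (∀ i, 1 ≤ i → i ≤ I.len → Pres3Set q (I.B i)) ∧
    (∀ i, 1 ≤ i → i + 1 ≤ I.len → Pres3Rel q (I.E i)) := by
  constructor
  · intro i h1 h2 x y z hx hy hz
    have := hq _ (hI ⟨1, fun _ => i, unaryRel (I.B i)⟩ (Or.inl ⟨i, h1, h2, rfl⟩))
      ![fun _ => x, fun _ => y, fun _ => z]
      (by intro j; fin_cases j <;> assumption)
    exact this
  · intro i h1 h2 x y z hx hy hz
    have := hq _ (hI ⟨2, ![i, i + 1], pairRel (I.E i)⟩ (Or.inr ⟨i, h1, h2, rfl⟩))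
      ![![x.1, x.2], ![y.1, y.2], ![z.1, z.2]]
      (by intro j; fin_cases j <;> assumption)
    exact this

/-- symmetric Datalog works on `n`-permutable path
instances. For each `N` and `n` there exists `f(n, N) ∈ ℕ` such that whenever
`𝔸` is a relational structure admitting a chain of `n` Hagemann–Mitschke terms
as polymorphisms and `I` is an unsatisfiable path instance of `CSP(𝔸)` with
`|B_i| ≤ N` for all `i`, then `𝒫_𝔸^{f(n,N)}(I) ⊢ G`. -/
theorem statement14 (N n : ℕ) :
    ∃ F : ℕ, ∀ (A : Type), Finite A → ∀ 𝔸 : RelStruct A, 𝔸.basic.Finite →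
      (∃ p : ℕ → A → A → A → A, IsHMChain n p ∧
        ∀ k ≤ n, IsPolymorphism 𝔸 (ternaryOp (p k))) →
      ∀ I : PathInstance A, IsCSPInstance 𝔸 I.toInstance →
        (¬∃ f : ℕ → A, IsSolution I f) →
        (∀ i, 1 ≤ i → i ≤ I.len → (I.B i).ncard ≤ N) →
        DerivesGoal 𝔸 F I.toInstance := by
  obtain ⟨F, hF⟩ := main_conn n N
  refine ⟨2 * F + 2, fun A hA 𝔸 _ ⟨p, hp, hpoly⟩ I hI hno hN => ?_⟩
  exact goal_of_conn hI (hF A hA p hp I (fun k hk => (pres_of_poly hI (hpoly k hk)).1)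
    (fun k hk => (pres_of_poly hI (hpoly k hk)).2) hno hN)

end CSPPaper
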